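/- arXiv:1601.07272 — 3 statements merged into one kernel-verified Lean document; each statement's English description precedes it below -/
import Mathlib

section
/- With the notation of the fundamental forms of a triangle, the matrix identity K·I − 2H·II + III = ((M₁−M₂)/(E·G−F²)) · ((E·M₁−F·L, E·N−F·M₂), (F·M₁−G·L, F·N−G·M₂)) holds. In particular, the second fundamental form II is symmetric (i.e. M₁ = M₂) if and only if K·I − 2H·II + III = 0. -/
open Matrix

/-- The Euclidean norm of a vector in `ℝ³`. -/
noncomputable def norm3 (u : Fin 3 → ℝ) : ℝ := Real.sqrt (u ⬝ᵥ u)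

/-!
Write `wⱼ = ∑ᵢ Aᵢⱼ vᵢ`. Then `II = -I A` and `III = Aᵀ I A = IIᵀ I⁻¹ II`. Multiplying the
Cayley–Hamilton identity for `S = I⁻¹ II` by `I` gives `K I - 2H II = -II I⁻¹ II`, so that
`K I - 2H II + III = (IIᵀ - II) I⁻¹ II`, where `IIᵀ - II = (M₁ - M₂) J` with
`J = ((0, 1), (-1, 0))`. As `J` and `I⁻¹` are invertible, this vanishes with `M₁ ≠ M₂` only if
`II = 0`, which forces `M₁ = M₂`. In the proof these identities are verified entrywise, in the
coordinates given by `A`.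
-/

/-- The Gram determinant of two independent vectors is nonzero, being `‖v₁ × v₂‖²`. -/
lemma gram_ne_zero (v₁ v₂ : Fin 3 → ℝ) (hli : LinearIndependent ℝ ![v₁, v₂]) :
    (v₁ ⬝ᵥ v₁) * (v₂ ⬝ᵥ v₂) - (v₁ ⬝ᵥ v₂) ^ 2 ≠ 0 := by
  have h := crossProduct_ne_zero_iff_linearIndependent.mpr hli
  have h2 := cross_dot_cross v₁ v₂ v₁ v₂
  rw [dotProduct_comm v₂ v₁, ← pow_two (v₁ ⬝ᵥ v₂)] at h2
  rw [← h2]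
  exact fun h3 => h (dotProduct_self_eq_zero.mp h3)

/-- Proposition 3.2 (Prop(KI-2HII+III=0)): with the notation of the fundamental forms of a
triangle, `K·I − 2H·II + III = ((M₁−M₂)/(EG−F²)) · ((EM₁−FL, EN−FM₂), (FM₁−GL, FN−GM₂))`;
in particular `II` is symmetric (`M₁ = M₂`) iff `K·I − 2H·II + III = 0`. -/
theorem stmt_0 (v₁ v₂ w₁ w₂ : Fin 3 → ℝ)
    (hli : LinearIndependent ℝ ![v₁, v₂])
    (hw₁ : w₁ ∈ Submodule.span ℝ ({v₁, v₂} : Set (Fin 3 → ℝ)))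
    (hw₂ : w₂ ∈ Submodule.span ℝ ({v₁, v₂} : Set (Fin 3 → ℝ)))
    (E F G L M₁ M₂ N : ℝ)
    (hE : E = v₁ ⬝ᵥ v₁) (hF : F = v₁ ⬝ᵥ v₂) (hG : G = v₂ ⬝ᵥ v₂)
    (hL : L = -(v₁ ⬝ᵥ w₁)) (hM₁ : M₁ = -(v₂ ⬝ᵥ w₁))
    (hM₂ : M₂ = -(v₁ ⬝ᵥ w₂)) (hN : N = -(v₂ ⬝ᵥ w₂))
    (I II III : Matrix (Fin 2) (Fin 2) ℝ)
    (hI : I = !![E, F; F, G])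
    (hII : II = !![L, M₂; M₁, N])
    (hIII : III = !![w₁ ⬝ᵥ w₁, w₁ ⬝ᵥ w₂; w₂ ⬝ᵥ w₁, w₂ ⬝ᵥ w₂])
    (H K : ℝ)
    (hH : H = (1/2) * Matrix.trace (I⁻¹ * II))
    (hK : K = Matrix.det (I⁻¹ * II)) :
    K • I - (2 * H) • II + III =
      ((M₁ - M₂) / (E * G - F ^ 2)) •
        !![E * M₁ - F * L, E * N - F * M₂; F * M₁ - G * L, F * N - G * M₂] ∧
    (M₁ = M₂ ↔ K • I - (2 * H) • II + III = 0) := by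
  have hD : E * G - F ^ 2 ≠ 0 := by
    rw [hE, hF, hG]
    exact gram_ne_zero v₁ v₂ hli
  have hinv : I⁻¹ = (E * G - F ^ 2)⁻¹ • !![G, -F; -F, E] := by
    rw [hI, Matrix.inv_def, Matrix.det_fin_two_of, Matrix.adjugate_fin_two_of,
      Ring.inverse_eq_inv', pow_two]
  have hH' : 2 * H = (E * N + G * L - F * (M₁ + M₂)) / (E * G - F ^ 2) := by
    rw [hH, hinv, hII]
    simp [Matrix.trace_fin_two]
    field_simp
    ring
  have hK' : K = (L * N - M₁ * M₂) / (E * G - F ^ 2) := by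
    rw [hK, hinv, hII, Matrix.det_mul, Matrix.det_smul]
    simp [Matrix.det_fin_two]
    field_simp
  have key : K • I - (2 * H) • II + III =
      ((M₁ - M₂) / (E * G - F ^ 2)) •
        !![E * M₁ - F * L, E * N - F * M₂; F * M₁ - G * L, F * N - G * M₂] := by
    obtain ⟨a, b, rfl⟩ := Submodule.mem_span_pair.mp hw₁
    obtain ⟨c, d, rfl⟩ := Submodule.mem_span_pair.mp hw₂
    simp only [dotProduct_add, add_dotProduct, dotProduct_smul, smul_dotProduct, smul_eq_mul,
      dotProduct_comm v₂ v₁, ← hE, ← hF, ← hG] at hL hM₁ hM₂ hN hIII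
    rw [hH', hK', hI, hII, hIII]
    ext i j
    fin_cases i <;> fin_cases j <;> simp <;> field_simp <;> rw [hL, hM₁, hM₂, hN] <;> ring
  refine ⟨key, fun h => by rw [key, h, sub_self, zero_div, zero_smul], fun h => ?_⟩
  rw [key] at h
  rcases smul_eq_zero.mp h with h | h
  · exact sub_eq_zero.mp ((div_eq_zero_iff.mp h).resolve_right hD)
  · have h00 : E * M₁ - F * L = 0 := by simpa using congrFun (congrFun h 0) 0
    have h01 : E * N - F * M₂ = 0 := by simpa using congrFun (congrFun h 0) 1
    have h10 : F * M₁ - G * L = 0 := by simpa using congrFun (congrFun h 1) 0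
    have h11 : F * N - G * M₂ = 0 := by simpa using congrFun (congrFun h 1) 1
    -- Both off-diagonal entries of `II` vanish, by Cramer's rule in each column.
    have e1 : (E * G - F ^ 2) * M₁ = 0 := by linear_combination G * h00 - F * h10
    have e2 : (E * G - F ^ 2) * M₂ = 0 := by linear_combination F * h01 - E * h11
    rw [(mul_eq_zero.mp e1).resolve_left hD, (mul_eq_zero.mp e2).resolve_left hD]
end

section
/- Let c = (c₁,c₂) ∈ ℤ²∖{(0,0)} and λ > 0, and let (c^{(n)})_{n≥1} in ℤ² and (λ^{(n)})_{n≥1} in ℝ_{>0} be sequences with c^{(1)} = c, λ^{(1)} = λ, such that for every n there exist integers k_n ≥ 2 and ℓ_n ≥ 0 with c^{(n+1)} = (k_n·c₁^{(n)} − ℓ_n·c₂^{(n)}, ℓ_n·c₁^{(n)} + (k_n+ℓ_n)·c₂^{(n)}) and λ^{(n+1)} = λ^{(n)}/√(k_n² + k_nℓ_n + ℓ_n²). Then every c^{(n)} ≠ (0,0), the radius r(λ^{(n)},c^{(n)}) equals r(λ,c) for all n, and as n → ∞ the curvatures converge: H(λ^{(n)},c^{(n)}) → −1/(2·r(λ,c))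 and K(λ^{(n)},c^{(n)}) → 0. -/
/-!
Write `Q(c) = c₁² + c₁c₂ + c₂²`, the Eisenstein norm form. A `(k,ℓ)` subdivision is multiplication
by an Eisenstein integer, so `Q` gets multiplied by `k² + kℓ + ℓ² ≥ 4` (`eis_step`). Hence
`Q(cₙ) → ∞`, no `cₙ` vanishes, and `L₀(cₙ)` grows by exactly the factor by which `λₙ` shrinks,
so that the radius is preserved.

For the curvatures put `x = c₁/√Q` and `y = c₂/√Q`, a point of the compact ellipse
`x² + xy + y² = 1`, and rescale `m = (m_x, m_y, m_z)` by `ρ = π²/Q`. Writing `sin u = u · sinc u`,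
the components of `m/ρ` are explicit polynomials in `x`, `y` times trigonometric factors of angles
that tend to `0` (`mx_eq`, `my_eq`, `mz_eq`); since `x` and `y` stay bounded, `m/ρ → (1, 0, 0)`.
The factors multiplying `-1/(2r)` in `H` and `1/r²` in `K` are homogeneous of degree `0` in `m`,
so `m` may be replaced by `m/ρ` there, and the limits are read off at `(1, 0, 0)`.
-/

/-- `L₀(c) = √(3(c₁² + c₁c₂ + c₂²))`, the normalized length of the chiral vector. -/
noncomputable def L0 (c : ℤ × ℤ) : ℝ :=
  Real.sqrt (3 * ((c.1 : ℝ)^2 + (c.1 : ℝ) * (c.2 : ℝ) + (c.2 : ℝ)^2))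

noncomputable def C1 (c : ℤ × ℤ) : ℝ := 3 * Real.pi * (c.1 : ℝ) / (L0 c)^2
noncomputable def C2 (c : ℤ × ℤ) : ℝ := 3 * Real.pi * (c.2 : ℝ) / (L0 c)^2
noncomputable def T1 (c : ℤ × ℤ) : ℝ :=
  -(3 * Real.pi * ((c.1 : ℝ) + 2 * (c.2 : ℝ))) / (L0 c)^2
noncomputable def T2 (c : ℤ × ℤ) : ℝ :=
  3 * Real.pi * (2 * (c.1 : ℝ) + (c.2 : ℝ)) / (L0 c)^2

noncomputable def mx (c : ℤ × ℤ) : ℝ :=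
  C1 c * Real.cos (C2 c / 2) * Real.sin (T2 c / 2)
    - C2 c * Real.cos (C1 c / 2) * Real.sin (T1 c / 2)

noncomputable def my (c : ℤ × ℤ) : ℝ :=
  -(C1 c) * Real.sin (C2 c / 2) * Real.sin (T2 c / 2)
    + C2 c * Real.sin (C1 c / 2) * Real.sin (T1 c / 2)

noncomputable def mz (c : ℤ × ℤ) : ℝ :=
  Real.sin (T1 c / 2) * Real.sin (T2 c / 2) * Real.sin ((T1 c + T2 c) / 2)

/-- The radius `r(λ,c) = λ·L₀(c)/(2π)` of the carbon nanotube `CNT(λ,c)`. -/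
noncomputable def cntRadius (lam : ℝ) (c : ℤ × ℤ) : ℝ := lam * L0 c / (2 * Real.pi)

/-- The constant mean curvature of the carbon nanotube `CNT(λ,c)`. -/
noncomputable def cntH (lam : ℝ) (c : ℤ × ℤ) : ℝ :=
  -(mx c / (2 * cntRadius lam c)) *
    ((mx c ^ 2 + my c ^ 2 + (8/3) * mz c ^ 2) /
      (mx c ^ 2 + my c ^ 2 + (4/3) * mz c ^ 2) ^ ((3 : ℝ) / 2))

/-- The constant Gauss curvature of the carbon nanotube `CNT(λ,c)`. -/
noncomputable def cntK (lam : ℝ) (c : ℤ × ℤ) : ℝ :=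
  4 * mz c ^ 2 * (mx c ^ 2 + my c ^ 2) /
    (3 * (cntRadius lam c) ^ 2 * (mx c ^ 2 + my c ^ 2 + (4/3) * mz c ^ 2) ^ 2)

open Filter Topology

/-! ### The Eisenstein norm -/

/-- The Eisenstein norm form `c₁² + c₁c₂ + c₂²`. -/
def eisQ (c : ℤ × ℤ) : ℤ := c.1 ^ 2 + c.1 * c.2 + c.2 ^ 2

lemma eisQ_pos {c : ℤ × ℤ} (h : c ≠ (0, 0)) : 0 < eisQ c := by
  unfold eisQ
  by_contra hn
  push Not at hn
  have h1 : c.1 = 0 := by nlinarith [sq_nonneg (c.1 + 2 * c.2), sq_nonneg c.1]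
  have h2 : c.2 = 0 := by nlinarith [sq_nonneg (2 * c.1 + c.2), sq_nonneg c.2]
  exact h (Prod.ext h1 h2)

/-- Multiplicativity of the Eisenstein norm. -/
lemma eis_step (c : ℤ × ℤ) (k l : ℤ) :
    eisQ (k * c.1 - l * c.2, l * c.1 + (k + l) * c.2) = (k ^ 2 + k * l + l ^ 2) * eisQ c := by
  simp only [eisQ]; ring

lemma L0_eq (c : ℤ × ℤ) : L0 c = Real.sqrt (3 * (eisQ c : ℝ)) := by
  simp [L0, eisQ]

lemma L0_sq {c : ℤ × ℤ} (h : 0 < eisQ c) : L0 c ^ 2 = 3 * (eisQ c : ℝ) := by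
  rw [L0_eq, Real.sq_sqrt]
  have : (0 : ℝ) < eisQ c := by exact_mod_cast h
  positivity

/-! ### Rescaled chiral indices and angles -/

/-- First coordinate of `c` rescaled to Eisenstein norm one. -/
noncomputable def nx (c : ℤ × ℤ) : ℝ := c.1 / Real.sqrt (eisQ c)

/-- Second coordinate of `c` rescaled to Eisenstein norm one. -/
noncomputable def ny (c : ℤ × ℤ) : ℝ := c.2 / Real.sqrt (eisQ c)

/-- The common order of magnitude `π²/Q(c)` by which `m` is rescaled. -/
noncomputable def rho (c : ℤ × ℤ) : ℝ := Real.pi ^ 2 * (Real.sqrt (eisQ c))⁻¹ ^ 2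

lemma rho_pos {c : ℤ × ℤ} (h : 0 < eisQ c) : 0 < rho c := by
  have : (0 : ℝ) < eisQ c := by exact_mod_cast h
  unfold rho; positivity

lemma nx_ny_norm {c : ℤ × ℤ} (h : 0 < eisQ c) :
    nx c ^ 2 + nx c * ny c + ny c ^ 2 = 1 := by
  have h0 : (0 : ℝ) < eisQ c := by exact_mod_cast h
  have hs : Real.sqrt (eisQ c) ^ 2 = eisQ c := Real.sq_sqrt h0.le
  have hp : Real.sqrt (eisQ c) ≠ 0 := (Real.sqrt_pos.2 h0).ne'
  have hQ : (eisQ c : ℝ) = (c.1 : ℝ) ^ 2 + c.1 * c.2 + (c.2 : ℝ) ^ 2 := by simp [eisQ]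
  unfold nx ny
  field_simp
  rw [hs, hQ]
  ring

lemma abs_nx_le {c : ℤ × ℤ} (h : 0 < eisQ c) : |nx c| ≤ 2 := by
  have := nx_ny_norm h
  apply abs_le_of_sq_le_sq _ (by norm_num)
  nlinarith [sq_nonneg (nx c + 2 * ny c)]

lemma abs_ny_le {c : ℤ × ℤ} (h : 0 < eisQ c) : |ny c| ≤ 2 := by
  have := nx_ny_norm h
  apply abs_le_of_sq_le_sq _ (by norm_num)
  nlinarith [sq_nonneg (2 * nx c + ny c)]

/-- All four angles are bounded multiples of `π/√Q`: the common shape is `3πa/L₀² = π(a/√Q)/√Q`. -/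
lemma angle_eq {c : ℤ × ℤ} (h : 0 < eisQ c) (a : ℝ) :
    3 * Real.pi * a / L0 c ^ 2
      = Real.pi * (a / Real.sqrt (eisQ c)) * (Real.sqrt (eisQ c))⁻¹ := by
  have h0 : (0 : ℝ) < eisQ c := by exact_mod_cast h
  have hs : Real.sqrt (eisQ c) ^ 2 = eisQ c := Real.sq_sqrt h0.le
  have hp : Real.sqrt (eisQ c) ≠ 0 := (Real.sqrt_pos.2 h0).ne'
  rw [L0_sq h]
  field_simp
  rw [hs]

lemma C1_eq {c : ℤ × ℤ} (h : 0 < eisQ c) :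
    C1 c = Real.pi * nx c * (Real.sqrt (eisQ c))⁻¹ := angle_eq h _

lemma C2_eq {c : ℤ × ℤ} (h : 0 < eisQ c) :
    C2 c = Real.pi * ny c * (Real.sqrt (eisQ c))⁻¹ := angle_eq h _

lemma T1_eq {c : ℤ × ℤ} (h : 0 < eisQ c) :
    T1 c = Real.pi * (-(nx c + 2 * ny c)) * (Real.sqrt (eisQ c))⁻¹ := by
  rw [T1, ← mul_neg, angle_eq h, nx, ny]; ring

lemma T2_eq {c : ℤ × ℤ} (h : 0 < eisQ c) :
    T2 c = Real.pi * (2 * nx c + ny c) * (Real.sqrt (eisQ c))⁻¹ := by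
  rw [T2, angle_eq h, nx, ny]; ring

/-! ### Limit of the rescaled vector `m` -/

lemma sin_eq_mul_sinc (u : ℝ) : Real.sin u = u * Real.sinc u := by
  by_cases hu : u = 0
  · simp [hu]
  · rw [Real.sinc_of_ne_zero hu]; field_simp

/-- The `1` comes from `x(2x+y)/2 + y(x+2y)/2 = x² + xy + y² = 1`. -/
lemma mx_eq {c : ℤ × ℤ} (h : 0 < eisQ c) :
    mx c = rho c * (1
      + nx c * (2 * nx c + ny c) / 2 * (Real.cos (C2 c / 2) * Real.sinc (T2 c / 2) - 1)
      + ny c * (nx c + 2 * ny c) / 2 * (Real.cos (C1 c / 2) * Real.sinc (T1 c / 2) - 1)) := by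
  have h1 : (1 : ℝ) = nx c * (2 * nx c + ny c) / 2 + ny c * (nx c + 2 * ny c) / 2 := by
    linear_combination -nx_ny_norm h
  rw [mx, sin_eq_mul_sinc (T2 c / 2), sin_eq_mul_sinc (T1 c / 2)]
  generalize Real.sinc (T2 c / 2) = s2
  generalize Real.sinc (T1 c / 2) = s1
  generalize Real.cos (C1 c / 2) = k1
  generalize Real.cos (C2 c / 2) = k2
  rw [C1_eq h, C2_eq h, T1_eq h, T2_eq h, rho]
  linear_combination (-(Real.pi ^ 2 * (Real.sqrt (eisQ c))⁻¹ ^ 2)) * h1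

lemma my_eq {c : ℤ × ℤ} (h : 0 < eisQ c) :
    my c = rho c * (
      -(nx c * (2 * nx c + ny c) / 2) * (Real.sin (C2 c / 2) * Real.sinc (T2 c / 2))
      + -(ny c * (nx c + 2 * ny c) / 2) * (Real.sin (C1 c / 2) * Real.sinc (T1 c / 2))) := by
  rw [my, sin_eq_mul_sinc (T2 c / 2), sin_eq_mul_sinc (T1 c / 2)]
  generalize Real.sinc (T2 c / 2) = s2
  generalize Real.sinc (T1 c / 2) = s1
  generalize Real.sin (C1 c / 2) = k1
  generalize Real.sin (C2 c / 2) = k2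
  rw [C1_eq h, C2_eq h, T1_eq h, T2_eq h, rho]
  ring

lemma mz_eq {c : ℤ × ℤ} (h : 0 < eisQ c) :
    mz c = rho c * (-((nx c + 2 * ny c) * (2 * nx c + ny c) / 4) *
      (Real.sinc (T1 c / 2) * Real.sinc (T2 c / 2) * Real.sin ((T1 c + T2 c) / 2))) := by
  rw [mz, sin_eq_mul_sinc (T2 c / 2), sin_eq_mul_sinc (T1 c / 2)]
  generalize Real.sinc (T2 c / 2) = s2
  generalize Real.sinc (T1 c / 2) = s1
  generalize Real.sin ((T1 c + T2 c) / 2) = k1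
  rw [T1_eq h, T2_eq h, rho]
  ring

lemma tendsto_bdd_mul {f g : ℕ → ℝ} {B : ℝ} (hf : ∀ n, |f n| ≤ B)
    (hg : Tendsto g atTop (𝓝 0)) : Tendsto (fun n => f n * g n) atTop (𝓝 0) := by
  refine squeeze_zero_norm (a := fun n => B * |g n|) (fun n => ?_) ?_
  · rw [Real.norm_eq_abs, abs_mul]
    exact mul_le_mul_of_nonneg_right (hf n) (abs_nonneg _)
  · simpa using (hg.abs.const_mul B)

/-- `m/ρ` tends to `(1, 0, 0)` along any sequence of chiral indices whose norms tend to infinity. -/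
lemma m_limits (c : ℕ → ℤ × ℤ) (hpos : ∀ n, 0 < eisQ (c n))
    (hlim : Tendsto (fun n => (eisQ (c n) : ℝ)) atTop atTop) :
    ∃ a b d : ℕ → ℝ, Tendsto a atTop (𝓝 1) ∧ Tendsto b atTop (𝓝 0) ∧ Tendsto d atTop (𝓝 0) ∧
      ∀ n, mx (c n) = rho (c n) * a n ∧ my (c n) = rho (c n) * b n ∧
        mz (c n) = rho (c n) * d n := by
  have he : Tendsto (fun n => (Real.sqrt (eisQ (c n)))⁻¹) atTop (𝓝 0) :=
    (Real.tendsto_sqrt_atTop.comp hlim).inv_tendsto_atTop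
  have hx := fun n => abs_le.1 (abs_nx_le (hpos n))
  have hy := fun n => abs_le.1 (abs_ny_le (hpos n))
  have hu : ∀ n, |2 * nx (c n) + ny (c n)| ≤ 6 := fun n => abs_le.2
    ⟨by linarith [(hx n).1, (hy n).1], by linarith [(hx n).2, (hy n).2]⟩
  have hv : ∀ n, |nx (c n) + 2 * ny (c n)| ≤ 6 := fun n => abs_le.2
    ⟨by linarith [(hx n).1, (hy n).1], by linarith [(hx n).2, (hy n).2]⟩
  have ang : ∀ f : ℕ → ℝ, (∀ n, |f n| ≤ 6) →
      Tendsto (fun n => Real.pi * f n * (Real.sqrt (eisQ (c n)))⁻¹) atTop (𝓝 0) := by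
    intro f hf
    simpa [mul_assoc] using (tendsto_bdd_mul hf he).const_mul Real.pi
  have hC1 : Tendsto (fun n => C1 (c n) / 2) atTop (𝓝 0) := by
    simpa [C1_eq (hpos _)] using
      (ang _ fun n => (abs_nx_le (hpos n)).trans (by norm_num)).div_const 2
  have hC2 : Tendsto (fun n => C2 (c n) / 2) atTop (𝓝 0) := by
    simpa [C2_eq (hpos _)] using
      (ang _ fun n => (abs_ny_le (hpos n)).trans (by norm_num)).div_const 2
  have hT1 : Tendsto (fun n => T1 (c n) / 2) atTop (𝓝 0) := by
    simp_rw [T1_eq (hpos _)]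
    simpa only [zero_div] using
      (ang (fun n => -(nx (c n) + 2 * ny (c n))) fun n => by rw [abs_neg]; exact hv n).div_const 2
  have hT2 : Tendsto (fun n => T2 (c n) / 2) atTop (𝓝 0) := by
    simp_rw [T2_eq (hpos _)]
    simpa only [zero_div] using (ang _ hu).div_const 2
  have hT : Tendsto (fun n => (T1 (c n) + T2 (c n)) / 2) atTop (𝓝 0) := by
    simpa [add_div] using hT1.add hT2
  have cosl : ∀ {f : ℕ → ℝ}, Tendsto f atTop (𝓝 0) →
      Tendsto (fun n => Real.cos (f n)) atTop (𝓝 1) := fun hf => by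
    simpa [Function.comp_def] using (Real.continuous_cos.tendsto 0).comp hf
  have sinl : ∀ {f : ℕ → ℝ}, Tendsto f atTop (𝓝 0) →
      Tendsto (fun n => Real.sin (f n)) atTop (𝓝 0) := fun hf => by
    simpa [Function.comp_def] using (Real.continuous_sin.tendsto 0).comp hf
  have sincl : ∀ {f : ℕ → ℝ}, Tendsto f atTop (𝓝 0) →
      Tendsto (fun n => Real.sinc (f n)) atTop (𝓝 1) := fun hf => by
    simpa [Function.comp_def] using (Real.continuous_sinc.tendsto 0).comp hf
  have hb1 : ∀ n, |nx (c n) * (2 * nx (c n) + ny (c n)) / 2| ≤ 6 := fun n => by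
    rw [abs_div, abs_mul, abs_of_pos (by norm_num : (0 : ℝ) < 2)]
    have := mul_le_mul (abs_nx_le (hpos n)) (hu n) (abs_nonneg _) (by norm_num)
    linarith
  have hb2 : ∀ n, |ny (c n) * (nx (c n) + 2 * ny (c n)) / 2| ≤ 6 := fun n => by
    rw [abs_div, abs_mul, abs_of_pos (by norm_num : (0 : ℝ) < 2)]
    have := mul_le_mul (abs_ny_le (hpos n)) (hv n) (abs_nonneg _) (by norm_num)
    linarith
  have hb3 : ∀ n, |(nx (c n) + 2 * ny (c n)) * (2 * nx (c n) + ny (c n)) / 4| ≤ 9 := fun n => by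
    rw [abs_div, abs_mul, abs_of_pos (by norm_num : (0 : ℝ) < 4)]
    have := mul_le_mul (hv n) (hu n) (abs_nonneg _) (by norm_num)
    linarith
  refine ⟨_, _, _, ?_, ?_, ?_, fun n => ⟨mx_eq (hpos n), my_eq (hpos n), mz_eq (hpos n)⟩⟩
  · have g2 := ((cosl hC2).mul (sincl hT2)).sub_const 1
    have g1 := ((cosl hC1).mul (sincl hT1)).sub_const 1
    rw [mul_one, sub_self] at g1 g2
    simpa only [add_zero] using ((tendsto_bdd_mul hb1 g2).const_add 1).add (tendsto_bdd_mul hb2 g1)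
  · have g2 := (sinl hC2).mul (sincl hT2)
    have g1 := (sinl hC1).mul (sincl hT1)
    rw [zero_mul] at g1 g2
    simpa only [add_zero] using
      (tendsto_bdd_mul (fun n => (abs_neg _).trans_le (hb1 n)) g2).add
        (tendsto_bdd_mul (fun n => (abs_neg _).trans_le (hb2 n)) g1)
  · have g := ((sincl hT1).mul (sincl hT2)).mul (sinl hT)
    rw [mul_zero] at g
    exact tendsto_bdd_mul (fun n => (abs_neg _).trans_le (hb3 n)) g

/-! ### Homogeneity of the curvature formulas -/

/-- The direction-dependent factor of `H` is homogeneous of degree `0`. -/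
lemma H_scale {p : ℝ} (hp : 0 < p) (r a b d : ℝ) :
    -(p * a / (2 * r)) * (((p * a) ^ 2 + (p * b) ^ 2 + (8/3) * (p * d) ^ 2) /
      ((p * a) ^ 2 + (p * b) ^ 2 + (4/3) * (p * d) ^ 2) ^ ((3 : ℝ) / 2))
    = -1 / (2 * r) * (a * ((a ^ 2 + b ^ 2 + (8/3) * d ^ 2) /
      (a ^ 2 + b ^ 2 + (4/3) * d ^ 2) ^ ((3 : ℝ) / 2))) := by
  have e : (p * a) ^ 2 + (p * b) ^ 2 + (4/3) * (p * d) ^ 2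
      = p ^ 2 * (a ^ 2 + b ^ 2 + (4/3) * d ^ 2) := by ring
  have e2 : (p ^ 2) ^ ((3 : ℝ) / 2) = p ^ 3 := by
    rw [← Real.rpow_natCast p 2, ← Real.rpow_mul hp.le, ← Real.rpow_natCast p 3]
    norm_num
  rw [e, Real.mul_rpow (by positivity) (by positivity), e2]
  generalize (a ^ 2 + b ^ 2 + (4/3) * d ^ 2) ^ ((3 : ℝ) / 2) = W
  have : (p * a) ^ 2 + (p * b) ^ 2 + (8/3) * (p * d) ^ 2
      = p ^ 2 * (a ^ 2 + b ^ 2 + (8/3) * d ^ 2) := by ring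
  rw [this]
  have h1 : p ^ 2 * (a ^ 2 + b ^ 2 + (8/3) * d ^ 2) / (p ^ 3 * W)
      = p⁻¹ * ((a ^ 2 + b ^ 2 + (8/3) * d ^ 2) / W) := by
    rw [mul_div_mul_comm]; congr 1; field_simp
  rw [h1]
  have h2 : p * p⁻¹ = 1 := mul_inv_cancel₀ hp.ne'
  linear_combination (-(a / (2 * r)) * ((a ^ 2 + b ^ 2 + (8/3) * d ^ 2) / W)) * h2

/-- The direction-dependent factor of `K` is homogeneous of degree `0`. -/
lemma K_scale {p : ℝ} (hp : 0 < p) (r a b d : ℝ) :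
    4 * (p * d) ^ 2 * ((p * a) ^ 2 + (p * b) ^ 2) /
      (3 * r ^ 2 * ((p * a) ^ 2 + (p * b) ^ 2 + (4/3) * (p * d) ^ 2) ^ 2)
    = 1 / (3 * r ^ 2) * (4 * d ^ 2 * (a ^ 2 + b ^ 2) /
      (a ^ 2 + b ^ 2 + (4/3) * d ^ 2) ^ 2) := by
  have e1 : 4 * (p * d) ^ 2 * ((p * a) ^ 2 + (p * b) ^ 2)
      = p ^ 4 * (1 * (4 * d ^ 2 * (a ^ 2 + b ^ 2))) := by ring
  have e2 : 3 * r ^ 2 * ((p * a) ^ 2 + (p * b) ^ 2 + (4/3) * (p * d) ^ 2) ^ 2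
      = p ^ 4 * (3 * r ^ 2 * (a ^ 2 + b ^ 2 + (4/3) * d ^ 2) ^ 2) := by ring
  rw [e1, e2, mul_div_mul_left _ _ (by positivity), mul_div_mul_comm]

/-! ### Convergence of the curvatures -/

/-- Theorem 6.7 (Thm(conv_of_cnt)): along a strictly monotone sequence of Goldberg–Coxeter
subdivisions of a carbon nanotube, the chiral indices stay nonzero, the radius is
preserved, the mean curvature converges to `−1/(2r(λ,c))`, and the Gauss curvature
converges to `0`. -/
theorem stmt_18 (c : ℤ × ℤ) (hc : c ≠ (0, 0)) (lam : ℝ) (hlam : 0 < lam)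
    (cseq : ℕ → ℤ × ℤ) (lseq : ℕ → ℝ)
    (hc0 : cseq 0 = c) (hl0 : lseq 0 = lam)
    (hstep : ∀ n : ℕ, ∃ k ℓ : ℤ, 2 ≤ k ∧ 0 ≤ ℓ ∧
      cseq (n + 1) =
        (k * (cseq n).1 - ℓ * (cseq n).2, ℓ * (cseq n).1 + (k + ℓ) * (cseq n).2) ∧
      lseq (n + 1) =
        lseq n / Real.sqrt ((k : ℝ)^2 + (k : ℝ) * (ℓ : ℝ) + (ℓ : ℝ)^2)) :
    (∀ n : ℕ, cseq n ≠ (0, 0)) ∧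
    (∀ n : ℕ, cntRadius (lseq n) (cseq n) = cntRadius lam c) ∧
    Filter.Tendsto (fun n : ℕ => cntH (lseq n) (cseq n)) Filter.atTop
      (nhds (-1 / (2 * cntRadius lam c))) ∧
    Filter.Tendsto (fun n : ℕ => cntK (lseq n) (cseq n)) Filter.atTop (nhds 0) := by
  have hQ : ∀ n : ℕ, (n : ℤ) + 1 ≤ eisQ (cseq n) := by
    intro n
    induction n with
    | zero =>
      have := eisQ_pos hc
      rw [hc0]; push_cast; omega
    | succ n ih =>
      obtain ⟨k, l, hk, hl, e, -⟩ := hstep n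
      rw [e, eis_step]
      have hN : 4 ≤ k ^ 2 + k * l + l ^ 2 := by nlinarith [mul_nonneg (by omega : 0 ≤ k) hl]
      push_cast
      nlinarith
  have hpos : ∀ n, 0 < eisQ (cseq n) := fun n => by have := hQ n; omega
  have hlim : Tendsto (fun n => (eisQ (cseq n) : ℝ)) atTop atTop := by
    refine tendsto_atTop_mono (fun n => ?_) tendsto_natCast_atTop_atTop
    have : (n : ℤ) ≤ eisQ (cseq n) := by have := hQ n; omega
    exact_mod_cast this
  have hr : ∀ n, cntRadius (lseq n) (cseq n) = cntRadius lam c := by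
    intro n
    induction n with
    | zero => rw [hc0, hl0]
    | succ n ih =>
      obtain ⟨k, l, hk, hl, e, e'⟩ := hstep n
      rw [← ih, cntRadius, cntRadius, e', L0_eq, L0_eq, e, eis_step]
      have hN : 0 < k ^ 2 + k * l + l ^ 2 := by nlinarith [mul_nonneg (by omega : 0 ≤ k) hl]
      have hN' : (0 : ℝ) < (k : ℝ) ^ 2 + k * l + (l : ℝ) ^ 2 := by exact_mod_cast hN
      push_cast
      rw [mul_left_comm, Real.sqrt_mul hN'.le]
      have := (Real.sqrt_pos.2 hN').ne'
      field_simp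
  obtain ⟨a, b, d, ha, hb, hd, hm⟩ := m_limits cseq hpos hlim
  have hS : ∀ t : ℝ, Tendsto (fun n => a n ^ 2 + b n ^ 2 + t * d n ^ 2) atTop (𝓝 1) := fun t => by
    simpa using ((ha.pow 2).add (hb.pow 2)).add ((hd.pow 2).const_mul t)
  refine ⟨fun n h => ?_, hr, ?_, ?_⟩
  · have := hpos n
    rw [h] at this
    simp [eisQ] at this
  · have hW := (hS (4/3)).rpow_const (p := (3 : ℝ) / 2) (Or.inl one_ne_zero)
    rw [Real.one_rpow] at hW
    have := (ha.mul ((hS (8/3)).div hW one_ne_zero)).const_mul (-1 / (2 * cntRadius lam c))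
    rw [div_one, mul_one, mul_one] at this
    refine this.congr fun n => ?_
    rw [cntH, hr, (hm n).1, (hm n).2.1, (hm n).2.2]
    exact (H_scale (rho_pos (hpos n)) _ _ _ _).symm
  · have := ((((hd.pow 2).const_mul 4).mul ((ha.pow 2).add (hb.pow 2))).div
      ((hS (4/3)).pow 2) (by norm_num)).const_mul (1 / (3 * cntRadius lam c ^ 2))
    have hz : 1 / (3 * cntRadius lam c ^ 2) *
        (4 * (0 : ℝ) ^ 2 * (1 ^ 2 + 0 ^ 2) / 1 ^ 2) = 0 := by norm_num
    rw [hz] at this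
    refine this.congr fun n => ?_
    rw [cntK, hr, (hm n).1, (hm n).2.1, (hm n).2.2]
    exact (K_scale (rho_pos (hpos n)) _ _ _ _).symm
end

section
/- Let c ≥ 1 be an integer and λ > 0, and consider the chiral index (c,c). Then m_z((c,c)) = 0, the Gauss curvature K(λ,(c,c)) = 0, and the mean curvature satisfies H(λ,(c,c)) = −(1/(2·r(λ,(c,c))))·cos(C₁/2), where C₁ = 3πc/L₀((c,c))² = π/(3c). -/
theorem L0_sq_armchair (c : ℤ) : L0 (c, c) ^ 2 = 9 * (c : ℝ) ^ 2 := by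
  unfold L0
  rw [Real.sq_sqrt (by nlinarith [sq_nonneg (c : ℝ)])]
  ring

theorem armchair_angles (c : ℤ) (hc : 1 ≤ c) :
    C1 (c, c) = Real.pi / (3 * (c : ℝ)) ∧ C2 (c, c) = Real.pi / (3 * (c : ℝ)) ∧
    T1 (c, c) = -(3 * (Real.pi / (3 * (c : ℝ)))) ∧
    T2 (c, c) = 3 * (Real.pi / (3 * (c : ℝ))) := by
  have hc0 : (c : ℝ) ≠ 0 := by
    have : c ≠ 0 := by omega
    exact_mod_cast this
  unfold C1 C2 T1 T2
  rw [L0_sq_armchair]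
  refine ⟨?_, ?_, ?_, ?_⟩ <;> field_simp <;> ring

/-- Theorem 4.5, armchair case (`c₁ = c₂ = c`): `m_z((c,c)) = 0`, the Gauss curvature
vanishes, and the mean curvature is `−(1/(2r))·cos(C₁/2)`, where
`C₁ = 3πc/L₀((c,c))² = π/(3c)`. -/
theorem stmt_19 (c : ℤ) (hc : 1 ≤ c) (lam : ℝ) (hlam : 0 < lam) :
    mz (c, c) = 0 ∧
    cntK lam (c, c) = 0 ∧
    cntH lam (c, c) = -(1 / (2 * cntRadius lam (c, c))) * Real.cos (C1 (c, c) / 2) ∧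
    C1 (c, c) = Real.pi / (3 * (c : ℝ)) := by
  obtain ⟨h1, h2, h3, h4⟩ := armchair_angles c hc
  have hc1 : (1 : ℝ) ≤ c := by exact_mod_cast hc
  have hz : mz (c, c) = 0 := by
    unfold mz
    rw [h3, h4, neg_add_cancel, zero_div, Real.sin_zero, mul_zero]
  refine ⟨hz, by simp [cntK, hz], ?_, h1⟩
  rw [h1]
  set a : ℝ := Real.pi / (3 * (c : ℝ)) with ha
  have ha0 : 0 < a := by have := Real.pi_pos; positivity
  have ha1 : 3 * a / 2 < Real.pi := by
    have h : 3 * a ≤ Real.pi := by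
      have : 3 * a = Real.pi / c := by rw [ha]; field_simp
      rw [this]
      exact div_le_self Real.pi_pos.le hc1
    linarith [Real.pi_pos]
  have hs : 0 < Real.sin (3 * a / 2) := Real.sin_pos_of_pos_of_lt_pi (by positivity) ha1
  have hx : mx (c, c) = 2 * a * Real.sin (3 * a / 2) * Real.cos (a / 2) := by
    unfold mx
    rw [h1, h2, h3, h4, neg_div, Real.sin_neg]
    ring
  have hy : my (c, c) = -(2 * a * Real.sin (3 * a / 2) * Real.sin (a / 2)) := by
    unfold my
    rw [h1, h2, h3, h4, neg_div, Real.sin_neg]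
    ring
  set q : ℝ := 2 * a * Real.sin (3 * a / 2)
  have hq : 0 < q := by positivity
  have hxy : mx (c, c) ^ 2 + my (c, c) ^ 2 = q ^ 2 := by
    rw [hx, hy]
    linear_combination q ^ 2 * Real.sin_sq_add_cos_sq (a / 2)
  have hpow : (q ^ 2) ^ ((3 : ℝ) / 2) = q ^ 3 := by
    rw [← Real.rpow_natCast q 2, ← Real.rpow_mul hq.le, ← Real.rpow_natCast q 3]
    norm_num
  have hquot : q ^ 2 / q ^ 3 = 1 / q := by field_simp
  unfold cntH
  rw [hz, hxy]
  simp only [ne_eq, OfNat.ofNat_ne_zero, not_false_eq_true, zero_pow, mul_zero, add_zero]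
  rw [hpow, hx, hquot]
  field_simp
end
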